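/- arXiv:2601.18052 — 2 statements merged into one kernel-verified Lean document; each statement's English description precedes it below -/
import Mathlib

section
/- Let N ≥ 1, P ≥ 1, let D_j : ℝ^N → ℝ^{m_j} for j = 0, …, P be linear maps, and let λ_j > 0. Then the dimension of the kernel of the block matrix H equals Σ_{j=0}^P dim ker D_j − dim(ker D_0 + ker D_1 + ⋯ + ker D_P). -/
/-!
Writing a vector as `x = (x_0, …, x_P)`, the `j`-th block of `H x` is
`∑ k, x_k + λ_j D_jᵀ D_j x_j`, so `xᵀ H x = |∑ k, x_k|² + ∑ j, λ_j |D_j x_j|²`. Hence `x ∈ ker H`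
exactly when every `x_j` lies in `ker D_j` and `∑ j, x_j = 0`: the kernel of `H` is a copy of the
kernel of the summation map `∏ j, ker D_j → ℝ^N`. The range of that map is `∑ j, ker D_j`, and
rank-nullity gives the formula.
-/

open Matrix

noncomputable def blockH {N : ℕ} (P : ℕ) (L : Fin (P + 1) → Matrix (Fin N) (Fin N) ℝ)
    (lam : Fin (P + 1) → ℝ) :
    Matrix (Fin (P + 1) × Fin N) (Fin (P + 1) × Fin N) ℝ :=
  fun p q =>
    if p.1 = q.1 then ((1 : Matrix (Fin N) (Fin N) ℝ) + lam p.1 • L p.1) p.2 q.2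
    else if p.2 = q.2 then 1 else 0

lemma blockH_mulVec_apply {N P : ℕ} (L : Fin (P + 1) → Matrix (Fin N) (Fin N) ℝ)
    (lam : Fin (P + 1) → ℝ) (x : Fin (P + 1) × Fin N → ℝ) (j : Fin (P + 1)) (i : Fin N) :
    (blockH P L lam *ᵥ x) (j, i) =
      (∑ k, x (k, i)) + lam j * (L j *ᵥ fun l => x (j, l)) i := by
  have hentry : ∀ k l, blockH P L lam (j, i) (k, l) =
      (if i = l then 1 else 0) + (if j = k then lam j * L j i l else 0) := by
    intro k l
    by_cases h : j = k <;> simp [blockH, h, Matrix.one_apply]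
  simp only [Matrix.mulVec, dotProduct, Fintype.sum_prod_type, hentry, add_mul,
    Finset.sum_add_distrib, ite_mul, one_mul, zero_mul, Finset.sum_ite_eq, Finset.mem_univ, if_true]
  congr 1
  rw [Finset.sum_comm, Finset.mul_sum]
  simp [mul_assoc]

lemma blockH_mulVec_eq_zero_iff {N P : ℕ} {m : Fin (P + 1) → ℕ}
    (D : ∀ j : Fin (P + 1), Matrix (Fin (m j)) (Fin N) ℝ)
    (lam : Fin (P + 1) → ℝ) (hlam : ∀ j, 0 < lam j) (x : Fin (P + 1) × Fin N → ℝ) :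
    blockH P (fun j => (D j)ᵀ * D j) lam *ᵥ x = 0 ↔
      (∀ j, D j *ᵥ (fun l => x (j, l)) = 0) ∧ ∀ i, ∑ k, x (k, i) = 0 := by
  constructor
  · intro h
    have hquad : (∑ i, (∑ k, x (k, i)) * (∑ k, x (k, i))) +
        ∑ j, lam j * ((D j *ᵥ fun l => x (j, l)) ⬝ᵥ (D j *ᵥ fun l => x (j, l))) = 0 := by
      have h0 : x ⬝ᵥ (blockH P (fun j => (D j)ᵀ * D j) lam *ᵥ x) = 0 := by rw [h]; simp
      rw [← h0]
      simp only [dotProduct, Fintype.sum_prod_type, blockH_mulVec_apply, mul_add,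
        Finset.sum_add_distrib]
      congr 1
      · rw [Finset.sum_comm]
        exact Finset.sum_congr rfl fun i _ => by rw [Finset.sum_mul]
      · refine Finset.sum_congr rfl fun j _ => ?_
        have hadj := Matrix.dotProduct_mulVec (fun l => x (j, l)) (D j)ᵀ
          (D j *ᵥ fun l => x (j, l))
        rw [Matrix.vecMul_transpose, Matrix.mulVec_mulVec] at hadj
        simp only [dotProduct] at hadj
        rw [← hadj, Finset.mul_sum]
        exact Finset.sum_congr rfl fun i _ => by ring
    have hnn : ∀ j, 0 ≤ lam j * ((D j *ᵥ fun l => x (j, l)) ⬝ᵥ (D j *ᵥ fun l => x (j, l))) :=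
      fun j => mul_nonneg (hlam j).le (Finset.sum_nonneg fun i _ => mul_self_nonneg _)
    obtain ⟨h1, h2⟩ := (add_eq_zero_iff_of_nonneg
      (Finset.sum_nonneg fun i _ => mul_self_nonneg _)
      (Finset.sum_nonneg fun j _ => hnn j)).1 hquad
    refine ⟨fun j => ?_, fun i => ?_⟩
    · have := (Finset.sum_eq_zero_iff_of_nonneg fun j _ => hnn j).1 h2 j (Finset.mem_univ j)
      exact dotProduct_self_eq_zero.1 ((mul_eq_zero.1 this).resolve_left (hlam j).ne')
    · exact mul_self_eq_zero.1 ((Finset.sum_eq_zero_iff_of_nonneg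
        fun i _ => mul_self_nonneg _).1 h1 i (Finset.mem_univ i))
  · rintro ⟨hD, hs⟩
    ext ⟨j, i⟩
    rw [blockH_mulVec_apply, hs, ← Matrix.mulVec_mulVec, hD]
    simp

/-- The summation map `∏ j, K j → V`. -/
def sumMap {ι V : Type*} [Fintype ι] [AddCommGroup V] [Module ℝ V] (K : ι → Submodule ℝ V) :
    (∀ j, K j) →ₗ[ℝ] V :=
  ∑ j, (K j).subtype ∘ₗ LinearMap.proj j

lemma sumMap_apply {ι V : Type*} [Fintype ι] [AddCommGroup V] [Module ℝ V]
    (K : ι → Submodule ℝ V) (f : ∀ j, K j) : sumMap K f = ∑ j, (f j : V) := by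
  simp [sumMap]

lemma range_sumMap {ι V : Type*} [Fintype ι] [AddCommGroup V] [Module ℝ V]
    (K : ι → Submodule ℝ V) : LinearMap.range (sumMap K) = ⨆ j, K j := by
  classical
  apply le_antisymm
  · rintro _ ⟨f, rfl⟩
    rw [sumMap_apply]
    exact Submodule.sum_mem _ fun j _ => Submodule.mem_iSup_of_mem j (f j).2
  · refine iSup_le fun j x hx => ⟨Pi.single j ⟨x, hx⟩, ?_⟩
    rw [sumMap_apply, Finset.sum_eq_single j]
    · simp
    · intro k _ hk
      simp [Pi.single_eq_of_ne hk]
    · simp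

/-- The inclusion of `∏ j, K j` into the space of block vectors. -/
def blockEmb {ι κ : Type*} (K : ι → Submodule ℝ (κ → ℝ)) : (∀ j, K j) →ₗ[ℝ] (ι × κ → ℝ) where
  toFun f p := (f p.1 : κ → ℝ) p.2
  map_add' _ _ := rfl
  map_smul' _ _ := rfl

lemma blockEmb_injective {ι κ : Type*} (K : ι → Submodule ℝ (κ → ℝ)) :
    Function.Injective (blockEmb K) := by
  intro f g h
  funext j
  ext i
  exact congrFun h (j, i)

lemma map_ker_sumMap {N P : ℕ} {m : Fin (P + 1) → ℕ}
    (D : ∀ j : Fin (P + 1), Matrix (Fin (m j)) (Fin N) ℝ)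
    (lam : Fin (P + 1) → ℝ) (hlam : ∀ j, 0 < lam j) :
    (LinearMap.ker (sumMap fun j => LinearMap.ker (D j).mulVecLin)).map
        (blockEmb fun j => LinearMap.ker (D j).mulVecLin) =
      LinearMap.ker (blockH P (fun j => (D j)ᵀ * D j) lam).mulVecLin := by
  ext x
  rw [LinearMap.mem_ker, Matrix.mulVecLin_apply, blockH_mulVec_eq_zero_iff D lam hlam]
  constructor
  · rintro ⟨f, hf, rfl⟩
    refine ⟨fun j => (f j).2, fun i => ?_⟩
    have := congrFun ((sumMap_apply _ f).symm.trans hf) i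
    simpa [blockEmb] using this
  · rintro ⟨hD, hs⟩
    refine ⟨fun j => ⟨fun l => x (j, l), hD j⟩, ?_, rfl⟩
    refine (sumMap_apply _ _).trans ?_
    ext i
    simpa using hs i

/-- The dimension of the kernel of the block matrix `H` equals
`Σ_j dim ker D_j − dim (ker D_0 + ⋯ + ker D_P)`. -/
theorem blockH_ker_finrank (N P : ℕ) (hN : 1 ≤ N) (hP : 1 ≤ P)
    (m : Fin (P + 1) → ℕ)
    (D : ∀ j : Fin (P + 1), Matrix (Fin (m j)) (Fin N) ℝ)
    (lam : Fin (P + 1) → ℝ) (hlam : ∀ j, 0 < lam j) :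
    Module.finrank ℝ (LinearMap.ker (blockH P (fun j => (D j)ᵀ * D j) lam).mulVecLin) =
      (∑ j : Fin (P + 1), Module.finrank ℝ (LinearMap.ker (D j).mulVecLin)) -
        Module.finrank ℝ ↥(⨆ j : Fin (P + 1), LinearMap.ker (D j).mulVecLin) := by
  have hrn := LinearMap.finrank_range_add_finrank_ker
    (sumMap fun j => LinearMap.ker (D j).mulVecLin)
  rw [range_sumMap, Module.finrank_pi_fintype] at hrn
  rw [← map_ker_sumMap D lam hlam,
    ← (Submodule.equivMapOfInjective _ (blockEmb_injective _) _).finrank_eq]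
  omega
end

section
/- Let N ≥ k + 1 with k ≥ 1, let D_0 = D_T be the second-difference operator on ℝ^N, let D_1 = D_k^{diff} be the seasonal differencing operator of period k, and let λ_0, λ_1 > 0. Then the kernel of the block matrix H (with P = 1) equals {(c𝟙, −c𝟙) : c ∈ ℝ}, where 𝟙 = (1,1,…,1) ∈ ℝ^N; in particular dim ker H = 1, so the penalized decomposition is identifiable only up to an additive constant shifted between the trend and the seasonal component. -/
/-!
Write `u = (x, y)`. Pairing the equation `H u = 0` with `u` gives
`‖x + y‖² + l0 ‖D_T x‖² + l1 ‖D_k y‖² = 0` (`quadForm_eq`), so on the kernel `y = -x`,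
`D_T x = 0` and `D_k y = 0`; conversely these three conditions make both block rows of `H u`
vanish. A vector with zero second differences is affine, `x_t = a + b t` (`affine_of_secondDiff`),
and one instance of `x_{t+k} = x_t`, available because `N > k`, forces `b k = 0`, so `x` is
constant. The kernel is therefore the line spanned by `(𝟙, -𝟙)`, which is nonzero since `N ≥ 1`.
-/

open Matrix

/-- The second-difference operator `(D_T x)_t = x_{t+2} - 2 x_{t+1} + x_t`. -/
noncomputable def secondDiff (N : ℕ) : Matrix (Fin (N - 2)) (Fin N) ℝ :=
  fun t s =>
    if (s : ℕ) = (t : ℕ) then 1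
    else if (s : ℕ) = (t : ℕ) + 1 then -2
    else if (s : ℕ) = (t : ℕ) + 2 then 1 else 0

/-- The seasonal differencing operator of period `k`: `(D x)_t = x_{t+k} - x_t`. -/
noncomputable def seasonalDiff (N k : ℕ) : Matrix (Fin (N - k)) (Fin N) ℝ :=
  fun t s =>
    if (s : ℕ) = (t : ℕ) + k then 1
    else if (s : ℕ) = (t : ℕ) then -1 else 0

lemma secondDiff_mulVec (N : ℕ) (x : Fin N → ℝ) (t : Fin (N - 2)) :
    (secondDiff N *ᵥ x) t = x ⟨t + 2, by omega⟩ - 2 * x ⟨t + 1, by omega⟩ + x ⟨t, by omega⟩ := by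
  have h : ∀ s : Fin N, secondDiff N t s * x s =
      (if s = ⟨t + 2, by omega⟩ then x s else 0) - 2 * (if s = ⟨t + 1, by omega⟩ then x s else 0)
        + (if s = ⟨t, by omega⟩ then x s else 0) := by
    intro s
    simp only [secondDiff, Fin.ext_iff]
    split_ifs <;> first | omega | ring
  simp only [mulVec, dotProduct, h, Finset.sum_add_distrib, Finset.sum_sub_distrib,
    ← Finset.mul_sum, Finset.sum_ite_eq', Finset.mem_univ, if_true]

lemma seasonalDiff_mulVec (N k : ℕ) (hk : 1 ≤ k) (x : Fin N → ℝ) (t : Fin (N - k)) :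
    (seasonalDiff N k *ᵥ x) t = x ⟨t + k, by omega⟩ - x ⟨t, by omega⟩ := by
  have h : ∀ s : Fin N, seasonalDiff N k t s * x s =
      (if s = ⟨t + k, by omega⟩ then x s else 0) - (if s = ⟨t, by omega⟩ then x s else 0) := by
    intro s
    simp only [seasonalDiff, Fin.ext_iff]
    split_ifs <;> first | omega | ring
  simp only [mulVec, dotProduct, h, Finset.sum_sub_distrib, Finset.sum_ite_eq', Finset.mem_univ,
    if_true]

lemma affine_of_secondDiff (N : ℕ) (hN : 2 ≤ N) (x : Fin N → ℝ) (h : secondDiff N *ᵥ x = 0)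
    (n : ℕ) (hn : n < N) :
    x ⟨n, hn⟩ = x ⟨0, by omega⟩ + n * (x ⟨1, by omega⟩ - x ⟨0, by omega⟩) := by
  induction n using Nat.strong_induction_on with
  | _ n ih =>
    match n, hn, ih with
    | 0, _, _ => simp
    | 1, _, _ => simp
    | m + 2, hn, ih =>
      have e := congrFun h ⟨m, by omega⟩
      rw [secondDiff_mulVec] at e
      have e1 := ih m (by omega) (by omega)
      have e2 := ih (m + 1) (by omega) (by omega)
      simp only [Pi.zero_apply] at e
      push_cast at e2 ⊢
      linear_combination e + 2 * e2 - e1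

section Block

variable {N : ℕ} (A B : Matrix (Fin N) (Fin N) ℝ) (l0 l1 : ℝ) (u : Fin 2 × Fin N → ℝ)

lemma blockH_mulVec_zero (i : Fin N) :
    (blockH 1 ![A, B] ![l0, l1] *ᵥ u) (0, i) =
      u (0, i) + u (1, i) + l0 * (A *ᵥ fun j => u (0, j)) i := by
  simp [mulVec, dotProduct, Fintype.sum_prod_type, blockH, add_mul, Finset.sum_add_distrib,
    Matrix.one_apply, Finset.mul_sum, mul_assoc]
  ring

lemma blockH_mulVec_one (i : Fin N) :
    (blockH 1 ![A, B] ![l0, l1] *ᵥ u) (1, i) =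
      u (0, i) + u (1, i) + l1 * (B *ᵥ fun j => u (1, j)) i := by
  simp [mulVec, dotProduct, Fintype.sum_prod_type, blockH, add_mul, Finset.sum_add_distrib,
    Matrix.one_apply, Finset.mul_sum, mul_assoc]
  ring

end Block

lemma dotProduct_gram {m n : ℕ} (D : Matrix (Fin m) (Fin n) ℝ) (x : Fin n → ℝ) :
    x ⬝ᵥ ((Dᵀ * D) *ᵥ x) = (D *ᵥ x) ⬝ᵥ (D *ᵥ x) := by
  rw [← mulVec_mulVec, dotProduct_mulVec, vecMul_transpose]

/-- The left side pairs `(x, y)` with the two block rows of `H (x, y)`; the right side exhibits the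
quadratic form of `H` as a sum of nonnegative terms when `l0, l1 ≥ 0`. -/
lemma quadForm_eq {m n N : ℕ} (D : Matrix (Fin m) (Fin N) ℝ) (E : Matrix (Fin n) (Fin N) ℝ)
    (l0 l1 : ℝ) (x y : Fin N → ℝ) :
    x ⬝ᵥ (x + y + l0 • ((Dᵀ * D) *ᵥ x)) + y ⬝ᵥ (x + y + l1 • ((Eᵀ * E) *ᵥ y)) =
      (x + y) ⬝ᵥ (x + y) + l0 * ((D *ᵥ x) ⬝ᵥ (D *ᵥ x)) + l1 * ((E *ᵥ y) ⬝ᵥ (E *ᵥ y)) := by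
  simp only [dotProduct_add, add_dotProduct, dotProduct_smul, dotProduct_gram, smul_eq_mul]
  ring

lemma mem_ker_blockH_iff {m n N : ℕ} (D : Matrix (Fin m) (Fin N) ℝ)
    (E : Matrix (Fin n) (Fin N) ℝ) (l0 l1 : ℝ) (h0 : 0 < l0) (h1 : 0 < l1)
    (u : Fin 2 × Fin N → ℝ) :
    u ∈ LinearMap.ker (blockH 1 ![Dᵀ * D, Eᵀ * E] ![l0, l1]).mulVecLin ↔
      (∀ i, u (0, i) + u (1, i) = 0) ∧ (D *ᵥ fun i => u (0, i)) = 0 ∧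
        (E *ᵥ fun i => u (1, i)) = 0 := by
  rw [LinearMap.mem_ker, mulVecLin_apply]
  constructor
  · intro h
    set x : Fin N → ℝ := fun i => u (0, i) with hx
    set y : Fin N → ℝ := fun i => u (1, i) with hy
    have r0 : x + y + l0 • ((Dᵀ * D) *ᵥ x) = 0 := by
      funext i
      have := congrFun h (0, i)
      rw [blockH_mulVec_zero] at this
      exact this
    have r1 : x + y + l1 • ((Eᵀ * E) *ᵥ y) = 0 := by
      funext i
      have := congrFun h (1, i)
      rw [blockH_mulVec_one] at this
      exact this
    have q := quadForm_eq D E l0 l1 x y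
    rw [r0, r1, dotProduct_zero, dotProduct_zero, add_zero] at q
    have nonneg : ∀ {p : ℕ} (v : Fin p → ℝ), 0 ≤ v ⬝ᵥ v := fun v =>
      Finset.sum_nonneg fun i _ => mul_self_nonneg (v i)
    have p0 := nonneg (x + y)
    have p1 := mul_nonneg h0.le (nonneg (D *ᵥ x))
    have p2 := mul_nonneg h1.le (nonneg (E *ᵥ y))
    have z0 : (x + y) ⬝ᵥ (x + y) = 0 := by linarith
    have z1 : l0 * ((D *ᵥ x) ⬝ᵥ (D *ᵥ x)) = 0 := by linarith
    have z2 : l1 * ((E *ᵥ y) ⬝ᵥ (E *ᵥ y)) = 0 := by linarith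
    exact ⟨fun i => congrFun (dotProduct_self_eq_zero.1 z0) i,
      dotProduct_self_eq_zero.1 ((mul_eq_zero.1 z1).resolve_left h0.ne'),
      dotProduct_self_eq_zero.1 ((mul_eq_zero.1 z2).resolve_left h1.ne')⟩
  · rintro ⟨hs, hD, hE⟩
    funext ⟨j, i⟩
    fin_cases j
    · change (blockH 1 _ _ *ᵥ u) (0, i) = 0
      rw [blockH_mulVec_zero, ← mulVec_mulVec, hD, hs]
      simp
    · change (blockH 1 _ _ *ᵥ u) (1, i) = 0
      rw [blockH_mulVec_one, ← mulVec_mulVec, hE, hs]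
      simp

/-- With the second-difference penalty on the trend and the seasonal differencing penalty on the
seasonal component, the kernel of the block matrix `H` (with `P = 1`) is exactly
`{(c𝟙, −c𝟙) : c ∈ ℝ}`; in particular it is one-dimensional, so the decomposition is
identifiable only up to an additive constant. -/
theorem single_seasonality_differencing_ker (N k : ℕ) (hk : 1 ≤ k) (hN : k + 1 ≤ N)
    (l0 l1 : ℝ) (h0 : 0 < l0) (h1 : 0 < l1) :
    (∀ u : Fin 2 × Fin N → ℝ,
      u ∈ LinearMap.ker (blockH 1
          ![(secondDiff N)ᵀ * secondDiff N, (seasonalDiff N k)ᵀ * seasonalDiff N k]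
          ![l0, l1]).mulVecLin ↔
        ∃ c : ℝ, u = fun p => if p.1 = 0 then c else -c) ∧
    Module.finrank ℝ (LinearMap.ker (blockH 1
        ![(secondDiff N)ᵀ * secondDiff N, (seasonalDiff N k)ᵀ * seasonalDiff N k]
        ![l0, l1]).mulVecLin) = 1 := by
  have key : ∀ u : Fin 2 × Fin N → ℝ,
      u ∈ LinearMap.ker (blockH 1
          ![(secondDiff N)ᵀ * secondDiff N, (seasonalDiff N k)ᵀ * seasonalDiff N k]
          ![l0, l1]).mulVecLin ↔
        ∃ c : ℝ, u = fun p => if p.1 = 0 then c else -c := by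
    intro u
    rw [mem_ker_blockH_iff _ _ l0 l1 h0 h1]
    constructor
    · rintro ⟨hs, hD, hE⟩
      have aff := affine_of_secondDiff N (by omega) _ hD
      have e := congrFun hE ⟨0, by omega⟩
      rw [seasonalDiff_mulVec N k hk] at e
      simp only [Pi.zero_apply, zero_add] at e
      have a := aff k (by omega)
      have s0 := hs ⟨0, by omega⟩
      have sk := hs ⟨k, by omega⟩
      -- Periodicity between the indices `0` and `k` kills the slope of the affine trend.
      have slope : (k : ℝ) * (u (0, ⟨1, by omega⟩) - u (0, ⟨0, by omega⟩)) = 0 := by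
        linear_combination sk - s0 - e - a
      have hk0 : (k : ℝ) ≠ 0 := by
        exact_mod_cast (by omega : k ≠ 0)
      have slope0 := (mul_eq_zero.1 slope).resolve_left hk0
      have const : ∀ i : Fin N, u (0, i) = u (0, ⟨0, by omega⟩) := by
        intro i
        have := aff i i.2
        simp only [slope0, mul_zero, add_zero] at this
        exact this
      refine ⟨u (0, ⟨0, by omega⟩), ?_⟩
      funext ⟨j, i⟩
      fin_cases j
      · simpa using const i
      · have := hs i
        rw [const i] at this
        simpa using eq_neg_of_add_eq_zero_right this
    · rintro ⟨c, rfl⟩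
      refine ⟨fun i => by simp, ?_, ?_⟩
      · funext t
        rw [secondDiff_mulVec]
        simp only [if_true, Pi.zero_apply]
        ring
      · funext t
        rw [seasonalDiff_mulVec N k hk]
        simp
  refine ⟨key, ?_⟩
  rw [finrank_eq_one_iff']
  refine ⟨⟨fun p => if p.1 = 0 then 1 else -1, (key _).2 ⟨1, rfl⟩⟩, ?_, ?_⟩
  · intro h
    have := congrFun (congrArg Subtype.val h) (0, ⟨0, by omega⟩)
    simp at this
  · rintro ⟨w, hw⟩
    obtain ⟨c, rfl⟩ := (key w).1 hw
    refine ⟨c, Subtype.ext ?_⟩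
    funext p
    by_cases hp : p.1 = 0 <;> simp [hp]
end
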